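/- arXiv:1412.1332 — 2 statements merged into one kernel-verified Lean document; each statement's English description precedes it below -/
import Mathlib

section
/- Let d ≥ 1 and let n : ℝ^d → ℝ be a C^∞ function with n(x) > 0 for every x. Then for every x ∈ ℝ^d and every index i ∈ {1,…,d}, one has the Bohm-potential identity Σ_{j=1}^d ∂_j( n · ∂_i ∂_j (log n) )(x) = 2 n(x) · ∂_i( (Δ√n) / √n )(x); that is, div( n ∇² log n ) = 2 n ∇( Δ√n / √n ) pointwise. -/
/-- The `i`-th partial derivative of `f : ℝ^d → ℝ`. -/
noncomputable def pd {d : ℕ} (i : Fin d) (f : (Fin d → ℝ) → ℝ) (x : Fin d → ℝ) : ℝ :=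
  fderiv ℝ f x (Pi.single i 1)

/-!
Write `L = log n`. Since `∂_w n = n ∂_w L` and `∂_w √n = ½ √n ∂_w L`, one has
`∂_w ∂_w √n / √n = ½ ∂_w ∂_w L + ¼ (∂_w L)²`. Hence both `∂_w (n ∂_v ∂_w L)` and
`2 n ∂_v (∂_w ∂_w √n / √n)` equal `n (∂_w L ∂_v ∂_w L + ∂_v ∂_w ∂_w L)`, the former by symmetry of
second derivatives. The identity thus holds for each direction `w` separately, and summing over
any finite family of directions gives the theorem.
-/

section

open Filter Real
open scoped Topology

variable {E F : Type*} [NormedAddCommGroup E] [NormedSpace ℝ E]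
  [NormedAddCommGroup F] [NormedSpace ℝ F]

/-- The derivative of `f` in the direction `v`, as a function of the base point. It is defined
through the Fréchet derivative, so it takes the junk value `0` wherever `f` is not Fréchet
differentiable. The partial derivative `pd i` is the case `v = Pi.single i 1`. -/
noncomputable def dirDeriv (v : E) (f : E → F) (x : E) : F :=
  fderiv ℝ f x v

variable {v w x : E}

theorem contDiffAt_dirDeriv {m k : WithTop ℕ∞} {f : E → F} (hf : ContDiffAt ℝ k f x)
    (hmk : m + 1 ≤ k) : ContDiffAt ℝ m (dirDeriv v f) x :=
  (hf.fderiv_right hmk).clm_apply contDiffAt_const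

theorem dirDeriv_congr {f g : E → F} (h : f =ᶠ[𝓝 x] g) : dirDeriv v f x = dirDeriv v g x := by
  rw [dirDeriv, dirDeriv, h.fderiv_eq]

theorem dirDeriv_add {f g : E → F} (hf : DifferentiableAt ℝ f x) (hg : DifferentiableAt ℝ g x) :
    dirDeriv v (fun y => f y + g y) x = dirDeriv v f x + dirDeriv v g x := by
  simp [dirDeriv, fderiv_fun_add hf hg]

theorem dirDeriv_sum {ι : Type*} {s : Finset ι} {f : ι → E → F}
    (hf : ∀ j ∈ s, DifferentiableAt ℝ (f j) x) :
    dirDeriv v (fun y => ∑ j ∈ s, f j y) x = ∑ j ∈ s, dirDeriv v (f j) x := by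
  simp [dirDeriv, fderiv_fun_sum hf]

theorem dirDeriv_comm {f : E → F} (hf : ContDiffAt ℝ 2 f x) :
    dirDeriv v (dirDeriv w f) x = dirDeriv w (dirDeriv v f) x := by
  have hdiff : DifferentiableAt ℝ (fderiv ℝ f) x :=
    (hf.fderiv_right (m := 1) (by norm_num)).differentiableAt (by norm_num)
  have dirDeriv_eq (a b : E) : dirDeriv a (dirDeriv b f) x = fderiv ℝ (fderiv ℝ f) x a b := by
    change fderiv ℝ (fun y => fderiv ℝ f y b) x a = _
    simp [fderiv_clm_apply hdiff (differentiableAt_const b)]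
  rw [dirDeriv_eq, dirDeriv_eq]
  exact hf.isSymmSndFDerivAt (by simp) v w

variable {f g : E → ℝ}

theorem dirDeriv_mul (hf : DifferentiableAt ℝ f x) (hg : DifferentiableAt ℝ g x) :
    dirDeriv v (fun y => f y * g y) x = dirDeriv v f x * g x + f x * dirDeriv v g x := by
  simp only [dirDeriv, fderiv_fun_mul hf hg, add_apply, smul_apply, smul_eq_mul]
  ring

theorem dirDeriv_const_mul (c : ℝ) (hf : DifferentiableAt ℝ f x) :
    dirDeriv v (fun y => c * f y) x = c * dirDeriv v f x := by
  simp [dirDeriv, fderiv_const_mul hf]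

theorem dirDeriv_eq_mul_dirDeriv_log (hf : DifferentiableAt ℝ f x) (hx : f x ≠ 0) :
    dirDeriv v f x = f x * dirDeriv v (fun y => log (f y)) x := by
  simp [dirDeriv, fderiv.log hf hx, hx]

theorem dirDeriv_sqrt (hf : DifferentiableAt ℝ f x) (hx : 0 < f x) :
    dirDeriv v (fun y => √(f y)) x = √(f x) * (1 / 2 * dirDeriv v (fun y => log (f y)) x) := by
  have log_sqrt_eq : (fun y => log √(f y)) =ᶠ[𝓝 x] fun y => 1 / 2 * log (f y) := by
    filter_upwards [hf.continuousAt.eventually_const_lt hx] with y hy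
    rw [log_sqrt hy.le]
    ring
  rw [dirDeriv_eq_mul_dirDeriv_log (hf.sqrt hx.ne') (sqrt_pos.2 hx).ne',
    dirDeriv_congr log_sqrt_eq, dirDeriv_const_mul _ (hf.log hx.ne')]

theorem dirDeriv_dirDeriv_sqrt (hf : ContDiffAt ℝ 2 f x) (hx : 0 < f x) :
    dirDeriv v (dirDeriv w fun y => √(f y)) x =
      √(f x) * (1 / 2 * dirDeriv v (dirDeriv w fun y => log (f y)) x +
        1 / 4 * (dirDeriv v (fun y => log (f y)) x * dirDeriv w (fun y => log (f y)) x)) := by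
  have hdiff : DifferentiableAt ℝ f x := hf.differentiableAt (by norm_num)
  have dirDeriv_sqrt_eq : (dirDeriv w fun y => √(f y)) =ᶠ[𝓝 x]
      fun y => √(f y) * (1 / 2 * dirDeriv w (fun z => log (f z)) y) := by
    filter_upwards [hf.eventually (by simp), hdiff.continuousAt.eventually_const_lt hx]
      with y hfy hy
    exact dirDeriv_sqrt (hfy.differentiableAt (by norm_num)) hy
  have hlog : DifferentiableAt ℝ (dirDeriv w fun y => log (f y)) x :=
    (contDiffAt_dirDeriv (m := 1) (hf.log hx.ne') (by norm_num)).differentiableAt (by norm_num)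
  rw [dirDeriv_congr dirDeriv_sqrt_eq, dirDeriv_mul (hdiff.sqrt hx.ne') (hlog.const_mul _),
    dirDeriv_sqrt hdiff hx, dirDeriv_const_mul _ hlog]
  ring

theorem dirDeriv_dirDeriv_sqrt_div_sqrt (hf : ContDiffAt ℝ 2 f x) (hx : 0 < f x) :
    dirDeriv v (dirDeriv w fun y => √(f y)) x / √(f x) =
      1 / 2 * dirDeriv v (dirDeriv w fun y => log (f y)) x +
        1 / 4 * (dirDeriv v (fun y => log (f y)) x * dirDeriv w (fun y => log (f y)) x) := by
  rw [dirDeriv_dirDeriv_sqrt hf hx, mul_div_cancel_left₀ _ (sqrt_pos.2 hx).ne']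

theorem dirDeriv_mul_dirDeriv_dirDeriv_log (hf : ContDiffAt ℝ 3 f x) (hx : f x ≠ 0) :
    dirDeriv w (fun y => f y * dirDeriv v (dirDeriv w fun z => log (f z)) y) x =
      f x * (dirDeriv w (fun y => log (f y)) x * dirDeriv v (dirDeriv w fun y => log (f y)) x +
        dirDeriv v (dirDeriv w (dirDeriv w fun y => log (f y))) x) := by
  have hdiff : DifferentiableAt ℝ f x := hf.differentiableAt (by norm_num)
  have hlog : ContDiffAt ℝ 2 (dirDeriv w fun y => log (f y)) x :=
    contDiffAt_dirDeriv (hf.log hx) (by norm_num)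
  have hlog₂ : DifferentiableAt ℝ (dirDeriv v (dirDeriv w fun y => log (f y))) x :=
    (contDiffAt_dirDeriv (m := 1) hlog (by norm_num)).differentiableAt (by norm_num)
  rw [dirDeriv_mul hdiff hlog₂, dirDeriv_eq_mul_dirDeriv_log hdiff hx, dirDeriv_comm hlog]
  ring

theorem dirDeriv_dirDeriv_dirDeriv_sqrt_div_sqrt (hf : ContDiffAt ℝ 3 f x) (hx : 0 < f x) :
    dirDeriv v (fun y => dirDeriv w (dirDeriv w fun z => √(f z)) y / √(f y)) x =
      1 / 2 * (dirDeriv w (fun y => log (f y)) x * dirDeriv v (dirDeriv w fun y => log (f y)) x +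
        dirDeriv v (dirDeriv w (dirDeriv w fun y => log (f y))) x) := by
  have potential_eq : (fun y => dirDeriv w (dirDeriv w fun z => √(f z)) y / √(f y)) =ᶠ[𝓝 x]
      fun y => 1 / 2 * dirDeriv w (dirDeriv w fun z => log (f z)) y +
        1 / 4 * (dirDeriv w (fun z => log (f z)) y * dirDeriv w (fun z => log (f z)) y) := by
    filter_upwards [hf.eventually (by simp), hf.continuousAt.eventually_const_lt hx] with y hfy hy
    exact dirDeriv_dirDeriv_sqrt_div_sqrt (hfy.of_le (by norm_num)) hy
  have hlog : ContDiffAt ℝ 2 (dirDeriv w fun y => log (f y)) x :=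
    contDiffAt_dirDeriv (hf.log hx.ne') (by norm_num)
  have hlog₁ : DifferentiableAt ℝ (dirDeriv w fun y => log (f y)) x :=
    hlog.differentiableAt (by norm_num)
  have hlog₂ : DifferentiableAt ℝ (dirDeriv w (dirDeriv w fun y => log (f y))) x :=
    (contDiffAt_dirDeriv (m := 1) hlog (by norm_num)).differentiableAt (by norm_num)
  rw [dirDeriv_congr potential_eq,
    dirDeriv_add (hlog₂.const_mul _) ((hlog₁.fun_mul hlog₁).const_mul _),
    dirDeriv_const_mul _ hlog₂, dirDeriv_const_mul _ (hlog₁.fun_mul hlog₁),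
    dirDeriv_mul hlog₁ hlog₁]
  ring

theorem differentiableAt_dirDeriv_dirDeriv_sqrt_div_sqrt (hf : ContDiffAt ℝ 3 f x)
    (hx : 0 < f x) :
    DifferentiableAt ℝ (fun y => dirDeriv v (dirDeriv w fun z => √(f z)) y / √(f y)) x := by
  have hsqrt : ContDiffAt ℝ 3 (fun y => √(f y)) x := hf.sqrt hx.ne'
  have hsqrt₁ : ContDiffAt ℝ 2 (dirDeriv w fun y => √(f y)) x :=
    contDiffAt_dirDeriv hsqrt (by norm_num)
  have hsqrt₂ : ContDiffAt ℝ 1 (dirDeriv v (dirDeriv w fun y => √(f y))) x :=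
    contDiffAt_dirDeriv hsqrt₁ (by norm_num)
  exact (hsqrt₂.div (hsqrt.of_le (by norm_num)) (sqrt_pos.2 hx).ne').differentiableAt (by norm_num)

theorem bohm_identity_general {ι : Type*} [Fintype ι] (e : ι → E) (v : E) {n : E → ℝ}
    (hn : ContDiffAt ℝ 3 n x) (hx : 0 < n x) :
    ∑ j, dirDeriv (e j) (fun y => n y * dirDeriv v (dirDeriv (e j) fun z => log (n z)) y) x =
      2 * n x *
        dirDeriv v (fun y => (∑ j, dirDeriv (e j) (dirDeriv (e j) fun z => √(n z)) y) / √(n y))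
          x := by
  simp only [Finset.sum_div]
  rw [dirDeriv_sum fun j _ => differentiableAt_dirDeriv_dirDeriv_sqrt_div_sqrt hn hx,
    Finset.mul_sum]
  refine Finset.sum_congr rfl fun j _ => ?_
  rw [dirDeriv_mul_dirDeriv_dirDeriv_log hn hx.ne',
    dirDeriv_dirDeriv_dirDeriv_sqrt_div_sqrt hn hx]
  ring

end

/-- Bohm-potential identity: `div(n ∇² log n) = 2 n ∇(Δ√n/√n)` pointwise, for smooth
positive `n : ℝ^d → ℝ`. -/
theorem bohm_identity (d : ℕ) (hd : 1 ≤ d) (n : (Fin d → ℝ) → ℝ)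
    (hn : ContDiff ℝ (⊤ : ℕ∞) n) (hpos : ∀ x, 0 < n x) :
    ∀ (x : Fin d → ℝ) (i : Fin d),
      (∑ j : Fin d,
          pd j (fun y => n y * pd i (pd j (fun z => Real.log (n z))) y) x)
        = 2 * n x *
            pd i (fun y =>
              (∑ j : Fin d, pd j (pd j (fun z => Real.sqrt (n z))) y) / Real.sqrt (n y)) x := by
  intro x i
  have hn₃ : ContDiffAt ℝ 3 n x :=
    hn.contDiffAt.of_le (WithTop.coe_le_coe.2 (le_top : (3 : ℕ∞) ≤ ⊤))
  exact bohm_identity_general (fun j : Fin d => Pi.single j 1) (Pi.single i 1) hn₃ (hpos x)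
end

section
/- Let d ≥ 1 and let n : ℝ^d → ℝ be a C^∞ function with n(x) > 0 for every x. Then for every x ∈ ℝ^d and every index i ∈ {1,…,d}, n(x) · ∂_i( (Δ√n)/√n )(x) = ∂_i( Σ_{j=1}^d ∂_j( √n · ∂_j √n ) )(x) − 2 Σ_{j=1}^d ∂_j( ∂_j √n · ∂_i √n )(x); that is, n ∇( Δ√n / √n ) = ∇( div( √n ∇√n ) ) − 2 div( ∇√n ⊗ ∇√n ) pointwise. -/
/-!
Put `s = √n`. The product rule for the divergence gives `div (s ∇s) = |∇s|² + s Δs` and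
`div (∇s ⊗ ∇s) = ½ ∇|∇s|² + Δs ∇s`. In `∇ div (s ∇s) - 2 div (∇s ⊗ ∇s)` the terms `∇|∇s|²` cancel,
leaving `s ∇Δs - Δs ∇s = s² ∇(Δs / s)` by the quotient rule.
-/

open Topology

section PartialDerivatives

variable {d : ℕ} {f g : (Fin d → ℝ) → ℝ} {x : Fin d → ℝ}

lemma pd_congr (i : Fin d) (h : f =ᶠ[𝓝 x] g) : pd i f x = pd i g x := by
  simp only [pd, h.fderiv_eq]

lemma pd_add (i : Fin d) (hf : DifferentiableAt ℝ f x) (hg : DifferentiableAt ℝ g x) :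
    pd i (fun y => f y + g y) x = pd i f x + pd i g x := by
  simp [pd, fderiv_fun_add hf hg]

lemma pd_mul (i : Fin d) (hf : DifferentiableAt ℝ f x) (hg : DifferentiableAt ℝ g x) :
    pd i (fun y => f y * g y) x = pd i f x * g x + f x * pd i g x := by
  simp only [pd, fderiv_fun_mul hf hg, add_apply, smul_apply, smul_eq_mul]
  ring

lemma pd_sq (i : Fin d) (hf : DifferentiableAt ℝ f x) :
    pd i (fun y => f y ^ 2) x = 2 * (f x * pd i f x) := by
  simp only [sq, pd_mul i hf hf]
  ring

lemma pd_div (i : Fin d) (hf : DifferentiableAt ℝ f x) (hg : DifferentiableAt ℝ g x)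
    (hgx : g x ≠ 0) :
    pd i (fun y => f y / g y) x = (g x * pd i f x - f x * pd i g x) / g x ^ 2 := by
  have hquot : DifferentiableAt ℝ (fun y => f y / g y) x := by
    simpa only [div_eq_mul_inv] using hf.fun_mul (hg.fun_inv hgx)
  have hf_eq : f =ᶠ[𝓝 x] fun y => f y / g y * g y :=
    (hg.continuousAt.eventually_ne hgx).mono fun y hgy => (div_mul_cancel₀ (f y) hgy).symm
  rw [pd_congr i hf_eq, pd_mul i hquot hg]
  field_simp
  ring

lemma pd_sum {ι : Type*} (i : Fin d) {u : Finset ι} {F : ι → (Fin d → ℝ) → ℝ}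
    (hF : ∀ j ∈ u, DifferentiableAt ℝ (F j) x) :
    pd i (fun y => ∑ j ∈ u, F j y) x = ∑ j ∈ u, pd i (F j) x := by
  simp [pd, fderiv_fun_sum hF]

lemma contDiffAt_pd {k m : WithTop ℕ∞} (i : Fin d) (hf : ContDiffAt ℝ k f x) (hmk : m + 1 ≤ k) :
    ContDiffAt ℝ m (pd i f) x :=
  (hf.fderiv_right hmk).clm_apply contDiffAt_const

lemma differentiableAt_pd (i : Fin d) (hf : ContDiffAt ℝ 2 f x) :
    DifferentiableAt ℝ (pd i f) x :=
  (contDiffAt_pd (m := 1) i hf one_add_one_eq_two.le).differentiableAt one_ne_zero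

lemma pd_pd_eq_fderiv_fderiv (i j : Fin d) (hf : ContDiffAt ℝ 2 f x) :
    pd i (pd j f) x = fderiv ℝ (fderiv ℝ f) x (Pi.single i 1) (Pi.single j 1) := by
  have hf' : DifferentiableAt ℝ (fderiv ℝ f) x :=
    (hf.fderiv_right (m := 1) one_add_one_eq_two.le).differentiableAt one_ne_zero
  unfold pd
  simp [fderiv_clm_apply hf' (differentiableAt_const _)]

lemma pd_comm (i j : Fin d) (hf : ContDiffAt ℝ 2 f x) :
    pd i (pd j f) x = pd j (pd i f) x := by
  rw [pd_pd_eq_fderiv_fderiv i j hf, pd_pd_eq_fderiv_fderiv j i hf]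
  exact hf.isSymmSndFDerivAt (by simp) _ _

end PartialDerivatives

section VectorCalculus

variable {d : ℕ}

/-- The divergence of the vector field on `ℝ^d` whose `j`-th component is `F j`. -/
noncomputable def divergence (F : Fin d → (Fin d → ℝ) → ℝ) (x : Fin d → ℝ) : ℝ :=
  ∑ j, pd j (F j) x

/-- The Laplacian on `ℝ^d`, as the divergence of the gradient. It is written with `pd` because
Mathlib's `Laplacian` needs an inner product space, which `Fin d → ℝ` is not. -/
noncomputable def laplacian (f : (Fin d → ℝ) → ℝ) : (Fin d → ℝ) → ℝ :=
  divergence fun j => pd j f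

variable {f s : (Fin d → ℝ) → ℝ} {F : Fin d → (Fin d → ℝ) → ℝ} {x : Fin d → ℝ}

lemma divergence_mul (hf : DifferentiableAt ℝ f x) (hF : ∀ j, DifferentiableAt ℝ (F j) x) :
    divergence (fun j y => f y * F j y) x = ∑ j, pd j f x * F j x + f x * divergence F x := by
  simp only [divergence, pd_mul _ hf (hF _), Finset.sum_add_distrib, Finset.mul_sum]

lemma differentiableAt_laplacian (hs : ContDiffAt ℝ 3 s x) :
    DifferentiableAt ℝ (laplacian s) x :=
  DifferentiableAt.fun_sum (u := Finset.univ) fun j _ =>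
    differentiableAt_pd j (contDiffAt_pd j hs two_add_one_eq_three.le)

lemma divergence_mul_pd_self (hs : ContDiffAt ℝ 2 s x) :
    divergence (fun j y => s y * pd j s y) x = ∑ j, pd j s x ^ 2 + s x * laplacian s x := by
  simp only [divergence_mul (hs.differentiableAt two_ne_zero) fun j => differentiableAt_pd j hs,
    laplacian, sq]

lemma pd_sum_pd_sq (i : Fin d) (hs : ContDiffAt ℝ 2 s x) :
    pd i (fun y => ∑ j, pd j s y ^ 2) x = 2 * ∑ j, pd j s x * pd j (pd i s) x := by
  have hpd (j : Fin d) : DifferentiableAt ℝ (pd j s) x := differentiableAt_pd j hs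
  rw [pd_sum i fun j _ => (hpd j).fun_pow 2]
  simp only [pd_sq i (hpd _), pd_comm i _ hs, Finset.mul_sum]

lemma pd_divergence_mul_pd_self (i : Fin d) (hs : ContDiffAt ℝ 3 s x) :
    pd i (divergence fun j y => s y * pd j s y) x =
      2 * ∑ j, pd j s x * pd j (pd i s) x +
        (pd i s x * laplacian s x + s x * pd i (laplacian s) x) := by
  have hs₂ : ContDiffAt ℝ 2 s x := hs.of_le (by norm_num)
  have hs₁ : DifferentiableAt ℝ s x := hs.differentiableAt three_ne_zero
  have hΔ : DifferentiableAt ℝ (laplacian s) x := differentiableAt_laplacian hs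
  have hgrad_sq : DifferentiableAt ℝ (fun y => ∑ j, pd j s y ^ 2) x :=
    DifferentiableAt.fun_sum fun j _ => (differentiableAt_pd j hs₂).fun_pow 2
  have hdiv : divergence (fun j y => s y * pd j s y) =ᶠ[𝓝 x]
      fun y => ∑ j, pd j s y ^ 2 + s y * laplacian s y :=
    (hs₂.eventually (by simp)).mono fun _ => divergence_mul_pd_self
  rw [pd_congr i hdiv, pd_add i hgrad_sq (hs₁.fun_mul hΔ), pd_sum_pd_sq i hs₂, pd_mul i hs₁ hΔ]

lemma divergence_pd_mul_pd (i : Fin d) (hs : ContDiffAt ℝ 2 s x) :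
    divergence (fun j y => pd j s y * pd i s y) x =
      ∑ j, pd j s x * pd j (pd i s) x + pd i s x * laplacian s x := by
  simp only [mul_comm _ (pd i s _)]
  rw [divergence_mul (differentiableAt_pd i hs) fun j => differentiableAt_pd j hs]
  simp only [mul_comm, laplacian]

theorem sq_mul_pd_laplacian_div_self (i : Fin d) (hs : ContDiffAt ℝ 3 s x) (hsx : s x ≠ 0) :
    s x ^ 2 * pd i (fun y => laplacian s y / s y) x =
      pd i (divergence fun j y => s y * pd j s y) x -
        2 * divergence (fun j y => pd j s y * pd i s y) x := by
  rw [pd_div i (differentiableAt_laplacian hs) (hs.differentiableAt three_ne_zero) hsx,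
    mul_div_cancel₀ _ (pow_ne_zero 2 hsx), pd_divergence_mul_pd_self i hs,
    divergence_pd_mul_pd i (hs.of_le (by norm_num))]
  ring

end VectorCalculus

theorem quantum_term_rewrite_general {d : ℕ} {n : (Fin d → ℝ) → ℝ} {x : Fin d → ℝ}
    (hn : ContDiffAt ℝ 3 n x) (hpos : 0 < n x) (i : Fin d) :
    n x * pd i (fun y => laplacian (fun z => √(n z)) y / √(n y)) x =
      pd i (divergence fun j y => √(n y) * pd j (fun z => √(n z)) y) x -
        2 * divergence (fun j y => pd j (fun z => √(n z)) y * pd i (fun z => √(n z)) y) x := by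
  have h := sq_mul_pd_laplacian_div_self i (hn.sqrt hpos.ne') (Real.sqrt_pos.2 hpos).ne'
  rwa [Real.sq_sqrt hpos.le] at h

/-- For smooth positive `n : ℝ^d → ℝ`:
`n ∇(Δ√n/√n) = ∇(div(√n ∇√n)) − 2 div(∇√n ⊗ ∇√n)` pointwise. -/
theorem quantum_term_rewrite (d : ℕ) (hd : 1 ≤ d) (n : (Fin d → ℝ) → ℝ)
    (hn : ContDiff ℝ (⊤ : ℕ∞) n) (hpos : ∀ x, 0 < n x) :
    ∀ (x : Fin d → ℝ) (i : Fin d),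
      n x * pd i (fun y =>
          (∑ j : Fin d, pd j (pd j (fun z => Real.sqrt (n z))) y) / Real.sqrt (n y)) x
        = pd i (fun y => ∑ j : Fin d,
              pd j (fun z => Real.sqrt (n z) * pd j (fun w => Real.sqrt (n w)) z) y) x
          - 2 * ∑ j : Fin d,
              pd j (fun y =>
                pd j (fun z => Real.sqrt (n z)) y * pd i (fun z => Real.sqrt (n z)) y) x := by
  intro x i
  exact quantum_term_rewrite_general (contDiff_infty.1 hn 3).contDiffAt (hpos x) i
end
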